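/- For every n ≥ 1 and every t ∈ ℝ, the logarithmic derivatives of the recurrence coefficients β_k satisfy Σ_{k=1}^{n} β_k'(t)/β_k(t) = −p·α_{n+1}(t) + q·α_{n+1}(t)/( β_{n+1}(t)·β_n(t) ). -/

import Mathlib

/-!
Differentiating the orthogonality relations in `t` and using the moment equation determines the
moments `L[x^{-j} ∂ₜQ_n]`, `1 ≤ j ≤ n`. Since `∂ₜQ_n` has degree less than `n` and these `n` moments
are nondegenerate on such polynomials, this yields the structure relation
`∂ₜQ_n = -p α_{n+1} (Q_n - x Q_{n-1}) - q (α_{n+1} / β_{n+1}) Q_{n-1}`.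
At `x = 0` it gives the logarithmic derivative of `Q_n(0) = ∏_{k ≤ n} (-β_k)`.
-/

open Polynomial

/-- The moment functional `L^{(t)}` applied to `x^m · P(x)`, where the moments are
`L^{(t)}[x^k] = ν k t`. -/
noncomputable def Lmom (ν : ℤ → ℝ → ℂ) (m : ℤ) (P : Polynomial ℂ) (t : ℝ) : ℂ :=
  P.sum fun j c => c * ν (m + (j : ℤ)) t

section Algebra

variable {R : Type*} [CommRing R]

/-- The linear functional `P ↦ L[x^m P]` on polynomials, where `L` is the functional on Laurent
polynomials with moments `L[x^k] = μ k`. -/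
noncomputable def laurentMoment (μ : ℤ → R) (m : ℤ) : R[X] →ₗ[R] R :=
  lsum fun j => LinearMap.mulRight R (μ (m + j))

/-- L-orthogonality of a sequence of polynomials with respect to the functional with moments `μ`:
`L[x^{-n+s} Q_n] = 0` for `0 ≤ s < n`. -/
def IsLOrthogonal (μ : ℤ → R) (Q : ℕ → R[X]) : Prop :=
  ∀ n : ℕ, ∀ s < n, laurentMoment μ (-(n : ℤ) + (s : ℤ)) (Q n) = 0

/-- The three-term recurrence relation of L-orthogonal polynomials. Only the coefficients `β n` with
`1 ≤ n` and `α n` with `2 ≤ n` enter. -/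
structure IsLRecurrence (β α : ℕ → R) (Q : ℕ → R[X]) : Prop where
  zero : Q 0 = 1
  one : Q 1 = X - C (β 1)
  add_two (n : ℕ) : Q (n + 2) = (X - C (β (n + 2))) * Q (n + 1) - C (α (n + 2)) * (X * Q n)

theorem laurentMoment_eq_sum_range (μ : ℤ → R) (m : ℤ) {P : R[X]} {N : ℕ} (hP : P.natDegree < N) :
    laurentMoment μ m P = ∑ j ∈ Finset.range N, P.coeff j * μ (m + j) :=
  P.sum_over_range' (by simp) N hP

theorem laurentMoment_one (μ : ℤ → R) (m : ℤ) : laurentMoment μ m 1 = μ m := by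
  simp [laurentMoment_eq_sum_range μ m (N := 1)]

theorem laurentMoment_X_mul (μ : ℤ → R) (m : ℤ) (P : R[X]) :
    laurentMoment μ m (X * P) = laurentMoment μ (m + 1) P := by
  have hXP : (X * P).natDegree < P.natDegree + 1 + 1 := by
    grw [natDegree_mul_le, natDegree_X_le]
    lia
  rw [laurentMoment_eq_sum_range μ m hXP, laurentMoment_eq_sum_range μ (m + 1) (Nat.lt_add_one _),
    Finset.sum_range_succ']
  simp only [coeff_X_mul, coeff_X_mul_zero, zero_mul, add_zero, Nat.cast_add, Nat.cast_one,
    add_assoc, add_comm (1 : ℤ)]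

theorem laurentMoment_neg_shift (p q : R) (μ : ℤ → R) (m : ℤ) (P : R[X]) :
    laurentMoment (fun k => -(p * μ (k + 1) + q * μ (k - 1))) m P =
      -(p * laurentMoment μ (m + 1) P + q * laurentMoment μ (m - 1) P) := by
  simp only [laurentMoment_eq_sum_range _ _ P.natDegree.lt_succ_self, Finset.mul_sum,
    ← Finset.sum_add_distrib, ← Finset.sum_neg_distrib]
  refine Finset.sum_congr rfl fun j _ => ?_
  rw [add_right_comm m 1, sub_add_eq_add_sub m 1]
  ring

namespace IsLOrthogonal

variable {μ : ℤ → R} {Q : ℕ → R[X]}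

theorem laurentMoment_eq_zero (hQ : IsLOrthogonal μ Q) {n : ℕ} {m : ℤ} (hnm : -(n : ℤ) ≤ m)
    (hm : m < 0) : laurentMoment μ m (Q n) = 0 := by
  obtain ⟨s, hs⟩ := Int.le.dest hnm
  rw [← hs]
  exact hQ n s (by lia)

theorem eq_zero_of_degree_lt [NoZeroDivisors R] (hQ : IsLOrthogonal μ Q)
    (hmonic : ∀ n, IsMonicOfDegree (Q n) n)
    (hne : ∀ n : ℕ, laurentMoment μ (-(n + 1 : ℤ)) (Q n) ≠ 0) {n : ℕ} {P : R[X]}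
    (hdeg : P.degree < n) (hP : ∀ m : ℤ, -(n : ℤ) ≤ m → m < 0 → laurentMoment μ m P = 0) :
    P = 0 := by
  induction n generalizing P with
  | zero => simpa using hdeg
  | succ n ih =>
    have hsub : P - P.coeff n • Q n = 0 := by
      refine ih ?_ fun m hnm hm => ?_
      · rw [degree_lt_iff_coeff_zero] at hdeg ⊢
        intro j hj
        rcases hj.eq_or_lt with rfl | hlt
        · have hlead := (hmonic n).monic.coeff_natDegree
          rw [(hmonic n).natDegree_eq] at hlead
          simp [hlead]
        · have hcoeff : (Q n).coeff j = 0 :=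
            coeff_eq_zero_of_natDegree_lt ((hmonic n).natDegree_eq.trans_lt hlt)
          simp [hdeg j hlt, hcoeff]
      · simp [hP m (by lia) hm, hQ.laurentMoment_eq_zero hnm hm]
    have hPQ : P = P.coeff n • Q n := sub_eq_zero.mp hsub
    have hmoment := hP (-(n + 1 : ℤ)) (by lia) (by lia)
    rw [hPQ, map_smul, smul_eq_mul] at hmoment
    rw [hPQ, (mul_eq_zero.mp hmoment).resolve_right (hne n), zero_smul]

end IsLOrthogonal

namespace IsLRecurrence

variable {β α : ℕ → R} {Q : ℕ → R[X]}

theorem isMonicOfDegree [Nontrivial R] (h : IsLRecurrence β α Q) (n : ℕ) :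
    IsMonicOfDegree (Q n) n := by
  induction n using Nat.twoStepInduction with
  | zero => exact isMonicOfDegree_zero_iff.mpr h.zero
  | one => exact h.one ▸ isMonicOfDegree_X_sub_one _
  | more n ihn ihn₁ =>
    have hlead : IsMonicOfDegree ((X - C (β (n + 2))) * Q (n + 1)) (n + 2) := by
      have hmul := (isMonicOfDegree_X_sub_one (β (n + 2))).mul ihn₁
      rwa [add_comm 1] at hmul
    rw [h.add_two]
    refine hlead.sub ?_
    grw [natDegree_C_mul_le, natDegree_mul_le, natDegree_X_le, ihn.natDegree_eq]
    lia

theorem degree_sub_X_mul_lt [Nontrivial R] (h : IsLRecurrence β α Q) (n : ℕ) :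
    (Q (n + 1) - X * Q n).degree < ((n + 1 : ℕ) : WithBot ℕ) := by
  have hX : IsMonicOfDegree (X * Q n) (n + 1) := by
    simpa only [add_comm] using (isMonicOfDegree_X R).mul (h.isMonicOfDegree n)
  exact degree_le_natDegree.trans_lt <| Nat.cast_lt.mpr <|
    (h.isMonicOfDegree (n + 1)).natDegree_sub_lt n.succ_ne_zero hX

theorem coeff_zero_succ (h : IsLRecurrence β α Q) (n : ℕ) :
    (Q (n + 1)).coeff 0 = -β (n + 1) * (Q n).coeff 0 := by
  cases n with
  | zero => simp [h.zero, h.one]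
  | succ n => simp [h.add_two, sub_mul]

theorem coeff_zero_eq_prod (h : IsLRecurrence β α Q) (n : ℕ) :
    (Q n).coeff 0 = ∏ k ∈ Finset.Icc 1 n, -β k := by
  induction n with
  | zero => simp [h.zero]
  | succ n ih => rw [h.coeff_zero_succ, ih, Finset.prod_Icc_succ_top (by lia), mul_comm]

theorem laurentMoment_add_two (h : IsLRecurrence β α Q) (μ : ℤ → R) (n : ℕ) (m : ℤ) :
    laurentMoment μ m (Q (n + 2)) = laurentMoment μ (m + 1) (Q (n + 1))
      - β (n + 2) * laurentMoment μ m (Q (n + 1)) - α (n + 2) * laurentMoment μ (m + 1) (Q n) := by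
  simp only [h.add_two, sub_mul, C_mul', map_sub, map_smul, laurentMoment_X_mul, smul_eq_mul]

variable {μ : ℤ → R}

theorem laurentMoment_add_one_succ (h : IsLRecurrence β α Q) (hQ : IsLOrthogonal μ Q) {n : ℕ}
    {m : ℤ} (hnm : -(n + 1 : ℤ) ≤ m) (hm : m < 0) :
    laurentMoment μ (m + 1) (Q (n + 1)) = α (n + 2) * laurentMoment μ (m + 1) (Q n) := by
  have hrec := h.laurentMoment_add_two μ n m
  rw [hQ.laurentMoment_eq_zero (by push_cast; lia) hm,
    hQ.laurentMoment_eq_zero (n := n + 1) (by push_cast; lia) hm] at hrec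
  linear_combination -hrec

theorem beta_mul_laurentMoment_sub_one_succ (h : IsLRecurrence β α Q) (hQ : IsLOrthogonal μ Q)
    {n : ℕ} {m : ℤ} (hnm : -(n + 1 : ℤ) ≤ m) (hm : m < 0) :
    β (n + 2) * laurentMoment μ (m - 1) (Q (n + 1)) = -α (n + 2) * laurentMoment μ m (Q n) := by
  have hrec := h.laurentMoment_add_two μ n (m - 1)
  rw [sub_add_cancel, hQ.laurentMoment_eq_zero (n := n + 2) (by push_cast; lia) (by lia),
    hQ.laurentMoment_eq_zero (n := n + 1) (by push_cast; lia) hm] at hrec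
  linear_combination hrec

theorem laurentMoment_neg_succ_ne_zero [NoZeroDivisors R] (h : IsLRecurrence β α Q)
    (hQ : IsLOrthogonal μ Q) (hμ : μ 0 ≠ 0) (hα : ∀ n, α (n + 2) ≠ 0) (n : ℕ) :
    laurentMoment μ (-(n + 1 : ℤ)) (Q n) ≠ 0 := by
  induction n with
  | zero =>
    have hμ₁ : μ 0 = β 1 * μ (-1) := by
      have horth := hQ.laurentMoment_eq_zero (n := 1) (m := -1) (by simp) (by simp)
      rw [h.one, ← mul_one (X - C _), sub_mul, map_sub, C_mul', map_smul, laurentMoment_X_mul,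
        laurentMoment_one, laurentMoment_one, smul_eq_mul] at horth
      exact sub_eq_zero.mp horth
    rw [h.zero, laurentMoment_one]
    exact right_ne_zero_of_mul (hμ₁ ▸ hμ)
  | succ n ih =>
    have hstep := h.beta_mul_laurentMoment_sub_one_succ hQ (n := n) le_rfl (by lia)
    rw [← neg_add'] at hstep
    push_cast
    exact right_ne_zero_of_mul (hstep ▸ mul_ne_zero (neg_ne_zero.mpr (hα n)) ih)

end IsLRecurrence

theorem IsLRecurrence.eq_of_laurentMoment_eq {K : Type*} [Field K] {β α : ℕ → K} {Q : ℕ → K[X]}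
    {μ : ℤ → K} (h : IsLRecurrence β α Q) (hQ : IsLOrthogonal μ Q) (hμ : μ 0 ≠ 0)
    (hα : ∀ n, α (n + 2) ≠ 0) {n : ℕ} (hβ : β (n + 2) ≠ 0) {p q : K} {D : K[X]}
    (hdeg : D.degree < ((n + 1 : ℕ) : WithBot ℕ))
    (hD : ∀ m : ℤ, -(n + 1 : ℤ) ≤ m → m < 0 → laurentMoment μ m D =
      p * laurentMoment μ (m + 1) (Q (n + 1)) + q * laurentMoment μ (m - 1) (Q (n + 1))) :
    D = (-p * α (n + 2)) • (Q (n + 1) - X * Q n) - (q * (α (n + 2) / β (n + 2))) • Q n := by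
  have hQn : (Q n).degree < ((n + 1 : ℕ) : WithBot ℕ) :=
    degree_le_natDegree.trans_lt <| Nat.cast_lt.mpr <|
      (h.isMonicOfDegree n).natDegree_eq.trans_lt n.lt_succ_self
  rw [← sub_eq_zero]
  refine hQ.eq_zero_of_degree_lt h.isMonicOfDegree (h.laurentMoment_neg_succ_ne_zero hQ hμ hα)
    (n := n + 1) ?_ fun m hnm hm => ?_
  · simp only [← mem_degreeLT] at hdeg hQn ⊢
    exact sub_mem hdeg <| sub_mem
      (Submodule.smul_mem _ _ (mem_degreeLT.mpr (h.degree_sub_X_mul_lt n)))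
      (Submodule.smul_mem _ _ hQn)
  · push_cast at hnm
    have horth := hQ.laurentMoment_eq_zero (n := n + 1) (by push_cast; exact hnm) hm
    have hup := h.laurentMoment_add_one_succ hQ hnm hm
    have hdown : laurentMoment μ (m - 1) (Q (n + 1)) =
        -(α (n + 2) / β (n + 2)) * laurentMoment μ m (Q n) := by
      field_simp
      linear_combination h.beta_mul_laurentMoment_sub_one_succ hQ hnm hm
    simp only [map_sub, map_smul, smul_eq_mul, laurentMoment_X_mul, hD m hnm hm, horth, hup, hdown]
    ring

end Algebra

section Derivative

variable {𝕜 K : Type*} [NontriviallyNormedField 𝕜] [NontriviallyNormedField K] [NormedAlgebra 𝕜 K]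

/-- The polynomial `D` is the derivative at `t` of the polynomial-valued function `P` with respect
to the parameter, coefficient by coefficient. -/
def HasCoeffDerivAt (P : 𝕜 → K[X]) (D : K[X]) (t : 𝕜) : Prop :=
  ∀ j, HasDerivAt (fun s => (P s).coeff j) (D.coeff j) t

namespace HasCoeffDerivAt

variable {P S : 𝕜 → K[X]} {D E : K[X]} {t : 𝕜}

theorem const (P : K[X]) (t : 𝕜) : HasCoeffDerivAt (fun _ => P) 0 t :=
  fun j => hasDerivAt_const t (P.coeff j)

theorem C_comp {c : 𝕜 → K} {c' : K} (hc : HasDerivAt c c' t) :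
    HasCoeffDerivAt (fun s => C (c s)) (C c') t := by
  intro j
  cases j with
  | zero => simpa using hc
  | succ j => simpa [coeff_C] using hasDerivAt_const t (0 : K)

theorem sub (hP : HasCoeffDerivAt P D t) (hS : HasCoeffDerivAt S E t) :
    HasCoeffDerivAt (fun s => P s - S s) (D - E) t := by
  intro j
  simpa only [coeff_sub] using (hP j).fun_sub (hS j)

theorem mul (hP : HasCoeffDerivAt P D t) (hS : HasCoeffDerivAt S E t) :
    HasCoeffDerivAt (fun s => P s * S s) (D * S t + P t * E) t := by
  intro j
  simp only [coeff_mul, coeff_add, ← Finset.sum_add_distrib]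
  exact HasDerivAt.fun_sum fun i _ => (hP i.1).fun_mul (hS i.2)

theorem degree_lt {n : ℕ} (hP : HasCoeffDerivAt P D t) (hmonic : ∀ s, IsMonicOfDegree (P s) n) :
    D.degree < n := by
  refine (degree_lt_iff_coeff_zero D n).mpr fun j hj => ?_
  have hconst : (fun s => (P s).coeff j) = fun _ => (P t).coeff j :=
    funext fun s => (hmonic s).coeff_eq (hmonic t) hj
  exact (hconst ▸ hP j).unique (hasDerivAt_const t _)

theorem hasDerivAt_laurentMoment {N : ℕ} {ν : ℤ → 𝕜 → K} {ν' : ℤ → K} (hP : HasCoeffDerivAt P D t)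
    (hPdeg : ∀ s, (P s).natDegree < N) (hDdeg : D.natDegree < N)
    (hν : ∀ k, HasDerivAt (ν k) (ν' k) t) (m : ℤ) :
    HasDerivAt (fun s => laurentMoment (ν · s) m (P s))
      (laurentMoment (ν · t) m D + laurentMoment ν' m (P t)) t := by
  simp only [laurentMoment_eq_sum_range _ m (hPdeg _), laurentMoment_eq_sum_range _ m hDdeg,
    ← Finset.sum_add_distrib]
  exact HasDerivAt.fun_sum fun j _ => (hP j).fun_mul (hν _)

end HasCoeffDerivAt

variable {β α : ℕ → 𝕜 → K} {Q : ℕ → 𝕜 → K[X]} {t : 𝕜}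

theorem IsLRecurrence.exists_hasCoeffDerivAt
    (h : ∀ s, IsLRecurrence (β · s) (α · s) (Q · s)) (hβ : ∀ n, DifferentiableAt 𝕜 (β n) t)
    (hα : ∀ n, DifferentiableAt 𝕜 (α n) t) (n : ℕ) : ∃ D, HasCoeffDerivAt (Q n) D t := by
  have hlin (k : ℕ) : HasCoeffDerivAt (fun s => X - C (β k s)) (0 - C (deriv (β k) t)) t :=
    (HasCoeffDerivAt.const X t).sub (.C_comp (hβ k).hasDerivAt)
  induction n using Nat.twoStepInduction with
  | zero => exact ⟨0, (funext fun s => (h s).zero) ▸ .const 1 t⟩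
  | one => exact ⟨_, (funext fun s => (h s).one) ▸ hlin 1⟩
  | more n ihn ihn₁ =>
    obtain ⟨D, hD⟩ := ihn
    obtain ⟨D₁, hD₁⟩ := ihn₁
    exact ⟨_, (funext fun s => (h s).add_two n) ▸ ((hlin _).mul hD₁).sub
      ((HasCoeffDerivAt.C_comp (hα _).hasDerivAt).mul ((HasCoeffDerivAt.const X t).mul hD))⟩

theorem IsLRecurrence.logDeriv_coeff_zero (h : ∀ s, IsLRecurrence (β · s) (α · s) (Q · s)) {n : ℕ}
    (hβ : ∀ k ∈ Finset.Icc 1 n, DifferentiableAt 𝕜 (β k) t)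
    (hβne : ∀ k ∈ Finset.Icc 1 n, β k t ≠ 0) :
    logDeriv (fun s => (Q n s).coeff 0) t = ∑ k ∈ Finset.Icc 1 n, logDeriv (β k) t := by
  simp only [(h _).coeff_zero_eq_prod]
  rw [logDeriv_prod (fun k hk => neg_ne_zero.mpr (hβne k hk)) fun k hk => (hβ k hk).fun_neg]
  simp only [logDeriv_apply, deriv.fun_neg, neg_div_neg_eq]

theorem HasCoeffDerivAt.laurentMoment_eq_of_isLOrthogonal {p q : K} {ν : ℤ → 𝕜 → K} {n : ℕ}
    {D : K[X]} (hD : HasCoeffDerivAt (Q n) D t) (hmonic : ∀ s, IsMonicOfDegree (Q n s) n)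
    (hQ : ∀ s, IsLOrthogonal (ν · s) (Q · s))
    (hν : ∀ k, HasDerivAt (ν k) (-(p * ν (k + 1) t + q * ν (k - 1) t)) t) {m : ℤ}
    (hnm : -(n : ℤ) ≤ m) (hm : m < 0) :
    laurentMoment (ν · t) m D = p * laurentMoment (ν · t) (m + 1) (Q n t)
      + q * laurentMoment (ν · t) (m - 1) (Q n t) := by
  have hdeg (s : 𝕜) : (Q n s).natDegree < n + 1 := (hmonic s).natDegree_eq.trans_lt n.lt_succ_self
  have hDdeg : D.natDegree < n + 1 :=
    Nat.lt_succ_of_le (natDegree_le_of_degree_le (hD.degree_lt hmonic).le)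
  have hderiv := hD.hasDerivAt_laurentMoment hdeg hDdeg hν m
  simp only [(hQ _).laurentMoment_eq_zero hnm hm] at hderiv
  have hsum := hderiv.unique (hasDerivAt_const t 0)
  rw [laurentMoment_neg_shift p q (ν · t)] at hsum
  exact add_neg_eq_zero.mp hsum

theorem IsLRecurrence.hasCoeffDerivAt_succ {p q : K} {ν : ℤ → 𝕜 → K}
    (h : ∀ s, IsLRecurrence (β · s) (α · s) (Q · s)) (hQ : ∀ s, IsLOrthogonal (ν · s) (Q · s))
    (hν : ∀ k, HasDerivAt (ν k) (-(p * ν (k + 1) t + q * ν (k - 1) t)) t) (hν₀ : ν 0 t ≠ 0)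
    (hβ : ∀ n, DifferentiableAt 𝕜 (β n) t) (hα : ∀ n, DifferentiableAt 𝕜 (α n) t)
    (hαne : ∀ n, α (n + 2) t ≠ 0) {n : ℕ} (hβne : β (n + 2) t ≠ 0) :
    HasCoeffDerivAt (Q (n + 1)) ((-p * α (n + 2) t) • (Q (n + 1) t - X * Q n t)
      - (q * (α (n + 2) t / β (n + 2) t)) • Q n t) t := by
  obtain ⟨D, hD⟩ := IsLRecurrence.exists_hasCoeffDerivAt h hβ hα (n + 1)
  have hmonic (s : 𝕜) := (h s).isMonicOfDegree (n + 1)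
  convert hD
  refine ((h t).eq_of_laurentMoment_eq (hQ t) hν₀ hαne hβne (hD.degree_lt hmonic) ?_).symm
  exact fun m hnm hm =>
    hD.laurentMoment_eq_of_isLOrthogonal hmonic hQ hν (by push_cast; exact hnm) hm

theorem stmt_8_general {p q : K} {ν : ℤ → 𝕜 → K}
    (h : ∀ s, IsLRecurrence (β · s) (α · s) (Q · s)) (hQ : ∀ s, IsLOrthogonal (ν · s) (Q · s))
    (hν : ∀ k, HasDerivAt (ν k) (-(p * ν (k + 1) t + q * ν (k - 1) t)) t) (hν₀ : ν 0 t ≠ 0)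
    (hβ : ∀ n, DifferentiableAt 𝕜 (β n) t) (hα : ∀ n, DifferentiableAt 𝕜 (α n) t)
    (hβne : ∀ n, 1 ≤ n → β n t ≠ 0) (hαne : ∀ n, 1 ≤ n → α (n + 1) t ≠ 0) {n : ℕ} (hn : 1 ≤ n) :
    ∑ k ∈ Finset.Icc 1 n, logDeriv (β k) t =
      -p * α (n + 1) t + q * α (n + 1) t / (β (n + 1) t * β n t) := by
  obtain ⟨n, rfl⟩ := Nat.exists_eq_add_of_le' hn
  have hβ₁ : β (n + 1) t ≠ 0 := hβne _ n.succ_pos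
  have hβ₂ : β (n + 2) t ≠ 0 := hβne _ (n + 1).succ_pos
  have hne : (Q n t).coeff 0 ≠ 0 := by
    rw [(h t).coeff_zero_eq_prod]
    exact Finset.prod_ne_zero_iff.mpr fun k hk =>
      neg_ne_zero.mpr (hβne k (Finset.mem_Icc.mp hk).1)
  have hderiv := IsLRecurrence.hasCoeffDerivAt_succ h hQ hν hν₀ hβ hα
    (fun k => hαne (k + 1) k.succ_pos) hβ₂ 0
  rw [← IsLRecurrence.logDeriv_coeff_zero h (fun k _ => hβ k)
    fun k hk => hβne k (Finset.mem_Icc.mp hk).1, logDeriv_apply, hderiv.deriv]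
  simp only [coeff_sub, coeff_smul, smul_eq_mul, coeff_X_mul_zero, (h t).coeff_zero_succ]
  field_simp
  ring

end Derivative

theorem stmt_8 (p q : ℂ) (ν : ℤ → ℝ → ℂ)
    (hνdiff : ∀ k, Differentiable ℝ (ν k))
    (hνderiv : ∀ k t, deriv (ν k) t = -(p * ν (k + 1) t + q * ν (k - 1) t))
    (hν0 : ∀ t, ν 0 t ≠ 0)
    (Q : ℕ → ℝ → Polynomial ℂ)
    (hQ0 : ∀ t, Q 0 t = 1)
    (hQmonic : ∀ n t, (Q n t).Monic)
    (hQdeg : ∀ n t, (Q n t).natDegree = n)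
    (hQdiff : ∀ n j, Differentiable ℝ fun t => (Q n t).coeff j)
    (β α : ℕ → ℝ → ℂ)
    (hβdiff : ∀ n, Differentiable ℝ (β n))
    (hαdiff : ∀ n, Differentiable ℝ (α n))
    (hβ0 : ∀ t, β 0 t = 1) (hα0 : ∀ t, α 0 t = -1) (hα1 : ∀ t, α 1 t = 0)
    (hβne : ∀ n, 1 ≤ n → ∀ t, β n t ≠ 0)
    (hαne : ∀ n, 1 ≤ n → ∀ t, α (n + 1) t ≠ 0)
    (horth : ∀ n : ℕ, 1 ≤ n → ∀ s < n, ∀ t : ℝ, Lmom ν (-(n : ℤ) + (s : ℤ)) (Q n t) t = 0)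
    (hQ1 : ∀ t, Q 1 t = X - C (β 1 t))
    (hrec : ∀ n, 1 ≤ n → ∀ t,
      Q (n + 1) t = (X - C (β (n + 1) t)) * Q n t - C (α (n + 1) t) * (X * Q (n - 1) t)) :
    ∀ n, 1 ≤ n → ∀ t : ℝ,
      ∑ k ∈ Finset.Icc 1 n, deriv (β k) t / β k t =
        -p * α (n + 1) t + q * α (n + 1) t / (β (n + 1) t * β n t) := by
  intro n hn t
  exact stmt_8_general (fun s => ⟨hQ0 s, hQ1 s, fun n => hrec (n + 1) n.succ_pos s⟩)
    (fun s n r hr => horth n (Nat.zero_lt_of_lt hr) r hr s)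
    (fun k => hνderiv k t ▸ (hνdiff k t).hasDerivAt) (hν0 t) (hβdiff · t) (hαdiff · t)
    (hβne · · t) (hαne · · t) hn
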